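/- Let N ≥ 1, let Ω ⊆ ℝ^N be open, let p ≥ 2, let M > 0, and let h : Ω → ℝ be twice continuously differentiable with 0 < h(x) ≤ M and −Δ_p h(x) > 0 for every x ∈ Ω, where Δ_p h := div(|∇h|^{p−2}∇h). Then for every smooth compactly supported function θ : Ω → ℝ one has ∫_Ω (−Δ_p h(x)) |θ(x)|^p dx ≤ M^{p−1} ∫_Ω |∇θ(x)|^p dx. -/

import Mathlib

/-!
The proof is Picone's inequality. Put `V = |∇h|^{p-2} ∇h` and test `-Δ_p h = -div V` against
`φ = |θ|^p h^{1-p}`, that is, integrate the divergence of the field `φ V`. Since `y ↦ |y|^{p-2} y` is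
`C¹` for `p ≥ 2` (`contDiff_norm_rpow_smul`), `φ V` is `C¹` with compact support, so its divergence
has integral zero (`integral_vdiv_eq_zero`), which reads
`∫ (-Δ_p h) φ = ∫ ∇φ · V`. Expanding `∇φ` and using Young's inequality in the form
`p a b^{p-1} - (p-1) b^p ≤ a^p` with `a = |∇θ|` and `b = |θ||∇h|/h` gives the pointwise bound
`∇φ · V ≤ |∇θ|^p` (`picone_pointwise`). Finally `0 < h ≤ M` gives `1 ≤ M^{p-1} h^{1-p}`, and
positivity of `-Δ_p h` lets this factor be inserted on the left-hand side.
-/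

open MeasureTheory Metric Set Filter
open scoped RealInnerProductSpace Topology

/-- Divergence of a vector field on `ℝ^N`. -/
noncomputable def vdiv {N : ℕ} (V : EuclideanSpace ℝ (Fin N) → EuclideanSpace ℝ (Fin N))
    (x : EuclideanSpace ℝ (Fin N)) : ℝ :=
  ∑ i, ⟪fderiv ℝ V x (EuclideanSpace.single i 1), EuclideanSpace.single i 1⟫

/-- The `p`-Laplacian `Δ_p h = div(|∇h|^{p-2} ∇h)`. -/
noncomputable def pLap {N : ℕ} (p : ℝ) (h : EuclideanSpace ℝ (Fin N) → ℝ)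
    (x : EuclideanSpace ℝ (Fin N)) : ℝ :=
  vdiv (fun y => ‖gradient h y‖ ^ (p - 2) • gradient h y) x

/-- For `q > 0` the map `y ↦ |y|^q y` is differentiable everywhere; the stated derivative is
also correct at the origin, where it vanishes. -/
lemma hasFDerivAt_norm_rpow_smul {E : Type*} [NormedAddCommGroup E] [InnerProductSpace ℝ E]
    {q : ℝ} (hq : 0 < q) (x : E) :
    HasFDerivAt (fun y : E => ‖y‖ ^ q • y)
      (‖x‖ ^ q • ContinuousLinearMap.id ℝ E +
        ((q * ‖x‖ ^ (q - 2)) • innerSL ℝ x).smulRight x) x := by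
  by_cases hx : x = 0
  · subst hx
    simp only [norm_zero, Real.zero_rpow hq.ne', zero_smul, map_zero, smul_zero,
      ContinuousLinearMap.smulRight_zero, add_zero]
    refine .of_isLittleO ?_
    simp only [sub_zero, smul_zero, zero_apply]
    have h1 : (fun y : E => ‖y‖ ^ q) =o[𝓝 0] (fun _ : E => (1 : ℝ)) := by
      refine (Asymptotics.isLittleO_const_iff one_ne_zero).mpr ?_
      have : ContinuousAt (fun y : E => ‖y‖ ^ q) 0 :=
        continuousAt_id.norm.rpow_const (.inr hq.le)
      simpa [ContinuousAt, Real.zero_rpow hq.ne'] using this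
    simpa using h1.smul_isBigO (Asymptotics.isBigO_refl (fun y : E => y) (𝓝 0))
  · have h1 : HasFDerivAt (fun y : E => ‖y‖ ^ q) ((q * ‖x‖ ^ (q - 2)) • innerSL ℝ x) x := by
      apply HasStrictFDerivAt.hasFDerivAt
      convert! (hasStrictFDerivAt_norm_sq x).rpow_const (p := q / 2) (by simp [hx]) using 0
      simp_rw [← Real.rpow_natCast_mul (norm_nonneg _), ← Nat.cast_smul_eq_nsmul ℝ, smul_smul]
      ring_nf
    exact h1.smul (hasFDerivAt_id x)

/-- The nonlinearity `y ↦ |y|^q y` of the `(q+2)`-Laplacian is `C¹` for `q ≥ 0`. -/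
lemma contDiff_norm_rpow_smul {E : Type*} [NormedAddCommGroup E] [InnerProductSpace ℝ E]
    {q : ℝ} (hq : 0 ≤ q) : ContDiff ℝ 1 (fun y : E => ‖y‖ ^ q • y) := by
  rcases hq.eq_or_lt with rfl | hq
  · simpa using contDiff_fun_id
  rw [contDiff_one_iff_hasFDerivAt]
  refine ⟨_, ?_, hasFDerivAt_norm_rpow_smul hq⟩
  refine Continuous.add ?_ ?_
  · exact (continuous_norm.rpow_const (fun _ => .inr hq.le)).smul continuous_const
  rw [continuous_iff_continuousAt]
  intro x
  by_cases hx : x = 0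
  · subst hx
    simp only [ContinuousAt, ContinuousLinearMap.smulRight_zero]
    -- the derivative is homogeneous of degree `q > 0`, hence tends to zero at the origin
    refine squeeze_zero_norm (a := fun y : E => q * ‖y‖ ^ q) (fun y => ?_) ?_
    · rw [ContinuousLinearMap.norm_smulRight_apply, norm_smul, innerSL_apply_norm,
        Real.norm_of_nonneg (by positivity)]
      by_cases hy : y = 0
      · simp [hy, Real.zero_rpow hq.ne']
      · have : 0 < ‖y‖ := norm_pos_iff.mpr hy
        rw [Real.rpow_sub this, Real.rpow_two]
        apply le_of_eq
        field_simp
    · have : ContinuousAt (fun y : E => q * ‖y‖ ^ q) 0 :=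
        continuousAt_const.mul (continuousAt_id.norm.rpow_const (.inr hq.le))
      simpa [ContinuousAt, Real.zero_rpow hq.ne'] using this
  · have h1 : ContinuousAt (fun y : E => (q * ‖y‖ ^ (q - 2)) • innerSL ℝ y) x :=
      (continuousAt_const.mul (continuousAt_id.norm.rpow_const (.inl (by simpa using hx)))).smul
        (innerSL ℝ).continuous.continuousAt
    exact ((ContinuousLinearMap.smulRightL ℝ E E).continuous.continuousAt.comp h1).clm_apply
      continuousAt_id

/-- The product rule `div (φ V) = φ div V + ∇φ · V`. -/
lemma vdiv_smul {N : ℕ} {φ : EuclideanSpace ℝ (Fin N) → ℝ}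
    {V : EuclideanSpace ℝ (Fin N) → EuclideanSpace ℝ (Fin N)} {x : EuclideanSpace ℝ (Fin N)}
    (hφ : DifferentiableAt ℝ φ x) (hV : DifferentiableAt ℝ V x) :
    vdiv (fun y => φ y • V y) x = φ x * vdiv V x + fderiv ℝ φ x (V x) := by
  have hVx : V x = ∑ i, V x i • EuclideanSpace.single i (1 : ℝ) := by
    simpa using ((EuclideanSpace.basisFun (Fin N) ℝ).sum_repr (V x)).symm
  have h2 : fderiv ℝ φ x (V x) = ∑ i, V x i * fderiv ℝ φ x (EuclideanSpace.single i 1) := by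
    conv_lhs => rw [hVx]
    simp
  rw [h2]
  unfold vdiv
  rw [fderiv_fun_smul hφ hV, Finset.mul_sum, ← Finset.sum_add_distrib]
  refine Finset.sum_congr rfl fun i _ => ?_
  simp [inner_add_left, inner_smul_left, EuclideanSpace.inner_single_right]
  ring

lemma continuous_vdiv {N : ℕ} {F : EuclideanSpace ℝ (Fin N) → EuclideanSpace ℝ (Fin N)}
    (hF : ContDiff ℝ 1 F) : Continuous (vdiv F) := by
  have := hF.continuous_fderiv one_ne_zero
  unfold vdiv
  fun_prop

lemma hasCompactSupport_vdiv {N : ℕ}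
    {F : EuclideanSpace ℝ (Fin N) → EuclideanSpace ℝ (Fin N)}
    (hc : HasCompactSupport F) : HasCompactSupport (vdiv F) := by
  refine (hc.fderiv (𝕜 := ℝ)).mono fun x hx => ?_
  contrapose! hx
  simp only [Function.mem_support, not_not] at hx ⊢
  simp [vdiv, hx]

lemma integral_vdiv_eq_zero {N : ℕ}
    {F : EuclideanSpace ℝ (Fin N) → EuclideanSpace ℝ (Fin N)}
    (hF : ContDiff ℝ 1 F) (hc : HasCompactSupport F) : ∫ x, vdiv F x = 0 := by
  have hcont := hF.continuous_fderiv one_ne_zero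
  have hc' := hc.fderiv (𝕜 := ℝ)
  have hint : ∀ v, Integrable (fun x => fderiv ℝ F x v) := fun v =>
    (hcont.clm_apply continuous_const).integrable_of_hasCompactSupport (hc.fderiv_apply (𝕜 := ℝ) v)
  have hz : ∀ v, ∫ x, fderiv ℝ F x v = 0 := fun v => by
    -- integration by parts against the constant function `1`
    have := integral_smul_fderiv_eq_neg_fderiv_smul_of_integrable (μ := volume) (𝕜 := ℝ)
      (f := fun _ : EuclideanSpace ℝ (Fin N) => (1 : ℝ)) (g := F) (v := v)
      (by simp) (by simpa using hint v)
      (by simpa using hF.continuous.integrable_of_hasCompactSupport hc)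
      (by fun_prop) (fun x _ => hF.differentiable one_ne_zero x)
    simpa using this
  unfold vdiv
  rw [integral_finsetSum _ fun i _ => (hint _).inner_const _]
  refine Finset.sum_eq_zero fun i _ => ?_
  simp_rw [real_inner_comm]
  rw [integral_inner (hint _), hz, inner_zero_right]

/-- Young's inequality in the form used for Picone's inequality. -/
lemma young_picone {p a b : ℝ} (hp : 1 < p) (ha : 0 ≤ a) (hb : 0 ≤ b) :
    p * (a * b ^ (p - 1)) - (p - 1) * b ^ p ≤ a ^ p := by
  have hy := Real.young_inequality_of_nonneg ha (Real.rpow_nonneg hb (p - 1))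
    (Real.HolderConjugate.conjExponent hp)
  have h1 : p - 1 ≠ 0 := by linarith
  have h0 : p ≠ 0 := by linarith
  rw [← Real.rpow_mul hb, Real.conjExponent, mul_div_cancel₀ _ h1] at hy
  have := mul_le_mul_of_nonneg_left hy (by linarith : (0 : ℝ) ≤ p)
  have e : p * (a ^ p / p + b ^ p / (p / (p - 1))) = a ^ p + (p - 1) * b ^ p := by
    field_simp
  linarith

/-- The pointwise estimate `∇(|θ|^p h^{1-p}) · |∇h|^{p-2} ∇h ≤ |∇θ|^p`. -/
lemma picone_pointwise {N : ℕ} {p : ℝ} (hp : 2 ≤ p)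
    {h θ : EuclideanSpace ℝ (Fin N) → ℝ} {x : EuclideanSpace ℝ (Fin N)}
    (hpos : 0 < h x) (hh : DifferentiableAt ℝ h x) (hθ : DifferentiableAt ℝ θ x) :
    fderiv ℝ (fun y => |θ y| ^ p * h y ^ (1 - p)) x (‖gradient h x‖ ^ (p - 2) • gradient h x)
      ≤ ‖gradient θ x‖ ^ p := by
  have hp1 : 1 < p := by linarith
  have d1 : HasFDerivAt (fun y => |θ y| ^ p) ((p * |θ x| ^ (p - 2) * θ x) • fderiv ℝ θ x) x :=
    (hasDerivAt_abs_rpow (θ x) hp1).comp_hasFDerivAt x hθ.hasFDerivAt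
  have d2 : HasFDerivAt (fun y => h y ^ (1 - p))
      (((1 - p) * h x ^ (1 - p - 1)) • fderiv ℝ h x) x :=
    hh.hasFDerivAt.rpow_const (.inl hpos.ne')
  have e1 : ∀ v, fderiv ℝ θ x v = ⟪gradient θ x, v⟫ := fun v => by
    simp [gradient, InnerProductSpace.toDual_symm_apply]
  have e2 : ∀ v, fderiv ℝ h x v = ⟪gradient h x, v⟫ := fun v => by
    simp [gradient, InnerProductSpace.toDual_symm_apply]
  rw [(d1.fun_mul d2).fderiv]
  simp only [add_apply, smul_apply, smul_eq_mul, e1, e2,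
    inner_smul_right, real_inner_self_eq_norm_sq]
  have hci : θ x * ⟪gradient θ x, gradient h x⟫
      ≤ |θ x| * (‖gradient θ x‖ * ‖gradient h x‖) := by
    refine (le_abs_self _).trans ?_
    rw [abs_mul]
    gcongr
    exact abs_real_inner_le_norm _ _
  set a := ‖gradient θ x‖
  set G := ‖gradient h x‖
  set t := |θ x|
  set H := h x
  have ha : 0 ≤ a := norm_nonneg _
  have hG : 0 ≤ G := norm_nonneg _
  have ht : 0 ≤ t := abs_nonneg _
  have hY := young_picone hp1 ha (b := t * G / H) (by positivity)
  have r1 : ∀ s : ℝ, 0 ≤ s → s ^ (p - 2) * s = s ^ (p - 1) := fun s hs => by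
    rw [← Real.rpow_add_one' hs (by linarith)]; ring_nf
  have r2 : G ^ (p - 2) * G ^ 2 = G ^ p := by
    rw [← Real.rpow_two, ← Real.rpow_add' hG (by linarith)]; ring_nf
  have r3 : (t * G / H) ^ (p - 1) = t ^ (p - 1) * G ^ (p - 1) * H ^ (1 - p) := by
    rw [Real.div_rpow (by positivity) hpos.le, Real.mul_rpow ht hG, div_eq_mul_inv,
      ← Real.rpow_neg hpos.le, neg_sub]
  have r4 : (t * G / H) ^ p = t ^ p * G ^ p * H ^ (1 - p - 1) := by
    rw [Real.div_rpow (by positivity) hpos.le, Real.mul_rpow ht hG, div_eq_mul_inv,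
      ← Real.rpow_neg hpos.le]
    ring_nf
  rw [r3, r4, ← r1 t ht, ← r1 G hG, ← r2] at hY
  have hK : 0 ≤ p * t ^ (p - 2) * G ^ (p - 2) * H ^ (1 - p) := by positivity
  have := mul_le_mul_of_nonneg_left hci hK
  linarith

/-- Hardy-type inequality (Lemma 1.6, inequality (1.11)): for bounded positive
`p`-superharmonic `h`, `∫_Ω (-Δ_p h) |θ|^p ≤ M^{p-1} ∫_Ω |∇θ|^p`. -/
theorem hardy_inequality_bounded {N : ℕ} (hN : 1 ≤ N)
    (Ω : Set (EuclideanSpace ℝ (Fin N))) (hΩ : IsOpen Ω)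
    (p : ℝ) (hp : 2 ≤ p) (M : ℝ) (hM : 0 < M)
    (h : EuclideanSpace ℝ (Fin N) → ℝ)
    (hreg : ContDiffOn ℝ 2 h Ω)
    (hpos : ∀ x ∈ Ω, 0 < h x) (hbd : ∀ x ∈ Ω, h x ≤ M)
    (hsuper : ∀ x ∈ Ω, 0 < -pLap p h x)
    (θ : EuclideanSpace ℝ (Fin N) → ℝ)
    (hθ : ContDiff ℝ (⊤ : ℕ∞) θ) (hθc : HasCompactSupport θ) (hθΩ : tsupport θ ⊆ Ω) :
    ∫ x in Ω, (-pLap p h x) * |θ x| ^ p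
      ≤ M ^ (p - 1) * ∫ x in Ω, ‖gradient θ x‖ ^ p := by
  have hp1 : 1 < p := by linarith
  set V : EuclideanSpace ℝ (Fin N) → EuclideanSpace ℝ (Fin N) :=
    fun y => ‖gradient h y‖ ^ (p - 2) • gradient h y with hVdef
  set φ : EuclideanSpace ℝ (Fin N) → ℝ := fun y => |θ y| ^ p * h y ^ (1 - p) with hφdef
  have hhx : ∀ x ∈ Ω, ContDiffAt ℝ 2 h x := fun x hx => hreg.contDiffAt (hΩ.mem_nhds hx)
  have hVx : ∀ x ∈ Ω, ContDiffAt ℝ 1 V x := fun x hx => by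
    have hg : ContDiffAt ℝ 1 (gradient h) x :=
      (InnerProductSpace.toDual ℝ (EuclideanSpace ℝ (Fin N))).symm.contDiff.contDiffAt.comp x
        ((hhx x hx).fderiv_right (m := 1) (by norm_num))
    exact (contDiff_norm_rpow_smul (by linarith : 0 ≤ p - 2)).contDiffAt.comp x hg
  have hθ1 : ContDiff ℝ 1 θ := hθ.of_le (by exact_mod_cast le_top)
  have hφx : ∀ x ∈ Ω, ContDiffAt ℝ 1 φ x := fun x hx =>
    (hθ1.norm_rpow hp1).contDiffAt.mul
      (((hhx x hx).of_le (by norm_num)).rpow_const_of_ne (hpos x hx).ne')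
  have hφ0 : ∀ x, θ x = 0 → φ x = 0 := fun x hx => by
    simp [hφdef, hx, Real.zero_rpow (by linarith : p ≠ 0)]
  have hFc : HasCompactSupport (fun y => φ y • V y) := by
    refine hθc.mono fun x hx => ?_
    contrapose! hx
    simp only [Function.mem_support, not_not] at hx ⊢
    rw [hφ0 x hx, zero_smul]
  have hF : ContDiff ℝ 1 (fun y => φ y • V y) := by
    rw [contDiff_iff_contDiffAt]
    intro x
    by_cases hx : x ∈ tsupport θ
    · exact (hφx x (hθΩ hx)).smul (hVx x (hθΩ hx))
    · have : (fun y => φ y • V y) =ᶠ[𝓝 x] fun _ => 0 := by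
        filter_upwards [notMem_tsupport_iff_eventuallyEq.mp hx] with y hy
        rw [hφ0 y hy, zero_smul]
      exact contDiffAt_const.congr_of_eventuallyEq this
  have hFs : ∀ x, x ∉ Ω → vdiv (fun y => φ y • V y) x = 0 := fun x hx => by
    have : (fun y => φ y • V y) =ᶠ[𝓝 x] fun _ => 0 := by
      filter_upwards [notMem_tsupport_iff_eventuallyEq.mp fun h' => hx (hθΩ h')] with y hy
      rw [hφ0 y hy, zero_smul]
    simp [vdiv, this.fderiv_eq]
  have hint1 : Integrable (vdiv (fun y => φ y • V y)) :=
    (continuous_vdiv hF).integrable_of_hasCompactSupport (hasCompactSupport_vdiv hFc)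
  have hint2 : Integrable (fun x => ‖gradient θ x‖ ^ p) := by
    have hn : (fun x => ‖gradient θ x‖ ^ p) = fun x => ‖fderiv ℝ θ x‖ ^ p := by
      ext x; simp [gradient]
    rw [hn]
    refine Continuous.integrable_of_hasCompactSupport
      ((hθ1.continuous_fderiv one_ne_zero).norm.rpow_const fun _ => .inr (by linarith)) ?_
    exact (hθc.fderiv (𝕜 := ℝ)).comp_left (g := fun L => ‖L‖ ^ p)
      (by simp [Real.zero_rpow (by linarith : p ≠ 0)])
  have hzero : ∫ x in Ω, vdiv (fun y => φ y • V y) x = 0 := by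
    rw [setIntegral_eq_integral_of_forall_compl_eq_zero hFs, integral_vdiv_eq_zero hF hFc]
  calc ∫ x in Ω, (-pLap p h x) * |θ x| ^ p
      ≤ ∫ x in Ω, M ^ (p - 1) * (‖gradient θ x‖ ^ p - vdiv (fun y => φ y • V y) x) := by
        refine integral_mono_of_nonneg ?_
          ((hint2.sub hint1).const_mul _).integrableOn ?_
        · filter_upwards [ae_restrict_mem hΩ.measurableSet] with x hx
          have := hsuper x hx
          simp only [Pi.zero_apply]
          positivity
        · filter_upwards [ae_restrict_mem hΩ.measurableSet] with x hx
          have hs := hsuper x hx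
          have hP := picone_pointwise (θ := θ) hp (hpos x hx)
            ((hhx x hx).differentiableAt (by norm_num)) (hθ1.differentiable one_ne_zero x)
          have hd := vdiv_smul ((hφx x hx).differentiableAt one_ne_zero)
            ((hVx x hx).differentiableAt one_ne_zero)
          have hpl : vdiv V x = pLap p h x := rfl
          rw [hpl] at hd
          have hM1 : 1 ≤ M ^ (p - 1) * h x ^ (1 - p) := by
            rw [← neg_sub p 1, Real.rpow_neg (hpos x hx).le, ← div_eq_mul_inv,
              one_le_div (Real.rpow_pos_of_pos (hpos x hx) _)]
            exact Real.rpow_le_rpow (hpos x hx).le (hbd x hx) (by linarith)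
          have hn : 0 ≤ (-pLap p h x) * |θ x| ^ p := by positivity
          calc (-pLap p h x) * |θ x| ^ p
              ≤ (M ^ (p - 1) * h x ^ (1 - p)) * ((-pLap p h x) * |θ x| ^ p) :=
                le_mul_of_one_le_left hn hM1
            _ = M ^ (p - 1) * (φ x * (-pLap p h x)) := by simp only [hφdef]; ring
            _ ≤ _ := by
              gcongr
              rw [hd]
              linarith
    _ = M ^ (p - 1) * ∫ x in Ω, ‖gradient θ x‖ ^ p := by
        rw [integral_const_mul, integral_sub hint2.integrableOn hint1.integrableOn, hzero,
          sub_zero]
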